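/- arXiv:1609.03097 — 2 statements merged into one kernel-verified Lean document; each statement's English description precedes it below -/
import Mathlib

section
/- Let s ∈ [1/2, 1) and let φ : Δ̃ → Δ̃ be the translation of the torus induced by (x,y) ↦ (x + 1/2, y − √3/2) (since (1,−√3) ∈ Λ, the paper's piecewise formula (x,y) ↦ (x,y)+(1/2,−√3/2) for y ≥ 0 and (x,y) ↦ (x,y)+(−1/2,√3/2) for y < 0 induces this single translation on Δ̃). Then the tetrahedral PET f̃_s is conjugate to f̃_{1−s} by φ: for every point p ∈ Δ̃ at which both sides are defined, f̃_s(p) = φ⁻¹( f̃_{1−s}( φ(p) ) ). -/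
open MeasureTheory
open scoped Classical

noncomputable section

/-- The lattice Λ ⊂ ℝ² generated by (2,0) and (1,−√3). -/
def TetLat : AddSubgroup (ℝ × ℝ) :=
  AddSubgroup.closure {((2 : ℝ), (0 : ℝ)), ((1 : ℝ), -Real.sqrt 3)}

/-- The torus Δ̃ = ℝ²/Λ. -/
abbrev Torus := (ℝ × ℝ) ⧸ TetLat

/-- The quotient map ℝ² → Δ̃. -/
def tmk : ℝ × ℝ → Torus := QuotientAddGroup.mk

/-- The vertex sets of the four triangles A₀, A₁, A₂, A₃. -/
def triVerts : Fin 4 → Set (ℝ × ℝ)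
  | 0 => {((-1 : ℝ), (0 : ℝ)), ((-1/2 : ℝ), Real.sqrt 3 / 2), ((0 : ℝ), (0 : ℝ))}
  | 1 => {((-1 : ℝ), (0 : ℝ)), ((-1/2 : ℝ), Real.sqrt 3 / 2), ((-3/2 : ℝ), Real.sqrt 3 / 2)}
  | 2 => {((-1/2 : ℝ), Real.sqrt 3 / 2), ((0 : ℝ), (0 : ℝ)), ((1/2 : ℝ), Real.sqrt 3 / 2)}
  | 3 => {((-1 : ℝ), (0 : ℝ)), ((0 : ℝ), (0 : ℝ)), ((-1/2 : ℝ), -Real.sqrt 3 / 2)}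

/-- The triangle A_α, as a subset of the torus Δ̃. -/
def TriA (α : Fin 4) : Set Torus := tmk '' (convexHull ℝ (triVerts α))

/-- The involution ι of Δ̃, induced by (x,y) ↦ (−x,−y). -/
def iot : Torus → Torus := fun p => -p

/-- The unit vectors ω₀, ω₁, ω₂ in the directions of the cube roots of unity. -/
def om : Fin 3 → ℝ × ℝ
  | 0 => ((1 : ℝ), (0 : ℝ))
  | 1 => ((-1/2 : ℝ), Real.sqrt 3 / 2)
  | 2 => ((-1/2 : ℝ), -Real.sqrt 3 / 2)

/-- The index 3 − i. -/
def opp : Fin 3 → Fin 4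
  | 0 => 3
  | 1 => 2
  | 2 => 1

/-- The open region where f̃ᵢ translates by +s·ωᵢ. -/
def PosReg (i : Fin 3) : Set Torus :=
  interior ((⋃ α ∈ {a : Fin 4 | a ≠ opp i}, TriA α) ∪ iot '' TriA (opp i))

/-- The open region where f̃ᵢ translates by −s·ωᵢ. -/
def NegReg (i : Fin 3) : Set Torus :=
  interior (TriA (opp i) ∪ ⋃ α ∈ {a : Fin 4 | a ≠ opp i}, iot '' TriA α)

/-- The map f̃ᵢ (extended arbitrarily, by the −s·ωᵢ formula, off its domain of definition). -/
def fI (s : ℝ) (i : Fin 3) (p : Torus) : Torus :=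
  if p ∈ PosReg i then p + tmk (s • om i) else p - tmk (s • om i)

/-- The set where f̃ᵢ is defined. -/
def fIDef (i : Fin 3) (p : Torus) : Prop := p ∈ PosReg i ∨ p ∈ NegReg i

/-- The tetrahedral PET f̃ₛ = f̃₂ ∘ f̃₁ ∘ f̃₀. -/
def fS (s : ℝ) : Torus → Torus := fI s 2 ∘ fI s 1 ∘ fI s 0

/-- The set where f̃ₛ is defined. -/
def fSDef (s : ℝ) (p : Torus) : Prop :=
  fIDef 0 p ∧ fIDef 1 (fI s 0 p) ∧ fIDef 2 (fI s 1 (fI s 0 p))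


/-- The linear functional vanishing on ωᵢ and taking the values 0 and 1 on the sides of the
positive strip of f̃ᵢ. -/
def ell : Fin 3 → ((ℝ × ℝ) →ₗ[ℝ] ℝ)
  | 0 => (2 * Real.sqrt 3 / 3) • LinearMap.snd ℝ ℝ ℝ
  | 1 => (-1 : ℝ) • LinearMap.fst ℝ ℝ ℝ - (Real.sqrt 3 / 3) • LinearMap.snd ℝ ℝ ℝ
  | 2 => (-1 : ℝ) • LinearMap.fst ℝ ℝ ℝ + (Real.sqrt 3 / 3) • LinearMap.snd ℝ ℝ ℝ

/-- A vector on which `ell i` equals one. -/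
def dirv : Fin 3 → ℝ × ℝ
  | 0 => (0, Real.sqrt 3 / 2)
  | 1 => (-1, 0)
  | 2 => (-1, 0)

lemma sq3 : Real.sqrt 3 * Real.sqrt 3 = 3 := Real.mul_self_sqrt (by norm_num)

lemma ell_dirv (i : Fin 3) : ell i (dirv i) = 1 := by
  have := sq3
  fin_cases i <;> simp [ell, dirv] <;> linarith

lemma ell_lat (i : Fin 3) (x : ℝ × ℝ) (hx : x ∈ TetLat) : ∃ n : ℤ, ell i x = 2 * n := by
  have h3 := sq3
  unfold TetLat at hx
  induction hx using AddSubgroup.closure_induction with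
  | mem x hx =>
    simp only [Set.mem_insert_iff, Set.mem_singleton_iff] at hx
    rcases hx with rfl | rfl
    · fin_cases i
      · exact ⟨0, by simp [ell]⟩
      · exact ⟨-1, by simp [ell]⟩
      · exact ⟨-1, by simp [ell]⟩
    · fin_cases i
      · exact ⟨-1, by simp [ell]; linarith⟩
      · exact ⟨0, by simp [ell]; linarith⟩
      · exact ⟨-1, by simp [ell]; linarith⟩
  | zero => exact ⟨0, by simp⟩
  | add x y _ _ hx hy =>
    obtain ⟨m, hm⟩ := hx
    obtain ⟨n, hn⟩ := hy
    exact ⟨m + n, by rw [map_add, hm, hn]; push_cast; ring⟩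
  | neg x _ hx =>
    obtain ⟨m, hm⟩ := hx
    exact ⟨-m, by rw [map_neg, hm]; push_cast; ring⟩

lemma tmk_add (x y : ℝ × ℝ) : tmk (x + y) = tmk x + tmk y := rfl
lemma tmk_neg (x : ℝ × ℝ) : tmk (-x) = -tmk x := rfl
lemma tmk_sub (x y : ℝ × ℝ) : tmk (x - y) = tmk x - tmk y := rfl

lemma tmk_eq_iff (x y : ℝ × ℝ) : tmk x = tmk y ↔ -x + y ∈ TetLat := QuotientAddGroup.eq

lemma tmk_eq_of (x y : ℝ × ℝ) (m n : ℤ)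
    (h : y = x + m • ((2 : ℝ), (0 : ℝ)) + n • ((1 : ℝ), -Real.sqrt 3)) : tmk x = tmk y := by
  rw [tmk_eq_iff]
  have : -x + y = m • ((2 : ℝ), (0 : ℝ)) + n • ((1 : ℝ), -Real.sqrt 3) := by rw [h]; abel
  rw [this]
  exact TetLat.add_mem (TetLat.zsmul_mem (AddSubgroup.subset_closure (by simp)) _)
    (TetLat.zsmul_mem (AddSubgroup.subset_closure (by simp)) _)

lemma ell_tri (i : Fin 3) (α : Fin 4) (c : ℝ)
    (h : ∀ x ∈ triVerts α, c ≤ ell i x ∧ ell i x ≤ c + 1) (x : ℝ × ℝ) (hx : tmk x ∈ TriA α) :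
    ∃ n : ℤ, 2 * n + c ≤ ell i x ∧ ell i x ≤ 2 * n + c + 1 := by
  obtain ⟨y, hy, hxy⟩ := hx
  have hconv : Convex ℝ (ell i ⁻¹' Set.Icc c (c + 1)) :=
    (convex_Icc c (c + 1)).linear_preimage (ell i)
  have hy2 : y ∈ ell i ⁻¹' Set.Icc c (c + 1) :=
    convexHull_min (fun z hz => h z hz) hconv hy
  rw [tmk_eq_iff] at hxy
  obtain ⟨n, hn⟩ := ell_lat i _ hxy
  rw [map_add, map_neg] at hn
  obtain ⟨h1, h2⟩ := hy2
  exact ⟨n, by linarith, by linarith⟩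

lemma verts_pos (i : Fin 3) (α : Fin 4) (h : α ≠ opp i) :
    ∀ x ∈ triVerts α, 0 ≤ ell i x ∧ ell i x ≤ 0 + 1 := by
  have h3 := sq3
  have h4 := Real.sqrt_nonneg 3
  intro x hx
  fin_cases i <;> fin_cases α <;> simp [opp] at h <;>
    (simp only [triVerts, Set.mem_insert_iff, Set.mem_singleton_iff] at hx
     rcases hx with rfl | rfl | rfl <;> simp [ell] <;> (try constructor) <;> linarith)

lemma verts_neg (i : Fin 3) :
    ∀ x ∈ triVerts (opp i), (![-1, -1, 1] i : ℝ) ≤ ell i x ∧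
      ell i x ≤ (![-1, -1, 1] i : ℝ) + 1 := by
  have h3 := sq3
  have h4 := Real.sqrt_nonneg 3
  intro x hx
  fin_cases i <;>
    (simp only [opp, triVerts, Set.mem_insert_iff, Set.mem_singleton_iff] at hx
     rcases hx with rfl | rfl | rfl <;> simp [ell] <;> (try constructor) <;> (try norm_num) <;> linarith)

/-- The closed positive region. -/
def PosC (i : Fin 3) : Set Torus :=
  (⋃ α ∈ {a : Fin 4 | a ≠ opp i}, TriA α) ∪ iot '' TriA (opp i)

/-- The closed negative region. -/
def NegC (i : Fin 3) : Set Torus :=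
  TriA (opp i) ∪ ⋃ α ∈ {a : Fin 4 | a ≠ opp i}, iot '' TriA α

lemma mem_iot (S : Set Torus) (p : Torus) : p ∈ iot '' S ↔ -p ∈ S := by
  constructor
  · rintro ⟨q, hq, rfl⟩
    simpa [iot] using hq
  · intro h
    exact ⟨-p, h, by simp [iot]⟩

lemma mem_posC (i : Fin 3) (p : Torus) :
    p ∈ PosC i ↔ (∃ α, α ≠ opp i ∧ p ∈ TriA α) ∨ -p ∈ TriA (opp i) := by
  simp only [PosC, Set.mem_union, mem_iot, Set.mem_iUnion, Set.mem_setOf_eq, exists_prop]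

lemma mem_negC (i : Fin 3) (p : Torus) :
    p ∈ NegC i ↔ p ∈ TriA (opp i) ∨ (∃ α, α ≠ opp i ∧ -p ∈ TriA α) := by
  simp only [NegC, Set.mem_union, mem_iot, Set.mem_iUnion, Set.mem_setOf_eq, exists_prop]

lemma negC_iff (i : Fin 3) (p : Torus) : p ∈ NegC i ↔ -p ∈ PosC i := by
  rw [mem_negC, mem_posC, neg_neg, or_comm]

lemma ell_posC (i : Fin 3) (x : ℝ × ℝ) (hx : tmk x ∈ PosC i) :
    ∃ n : ℤ, 2 * n ≤ ell i x ∧ ell i x ≤ 2 * n + 1 := by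
  rw [mem_posC] at hx
  rcases hx with ⟨α, hα, hx⟩ | hx
  · obtain ⟨n, h1, h2⟩ := ell_tri i α 0 (verts_pos i α hα) x hx
    exact ⟨n, by linarith, by linarith⟩
  · rw [← tmk_neg] at hx
    obtain ⟨n, h1, h2⟩ := ell_tri i _ _ (verts_neg i) _ hx
    rw [map_neg] at h1 h2
    have h3 : (![-1, -1, 1] i : ℝ) = -1 ∨ (![-1, -1, 1] i : ℝ) = 1 := by
      fin_cases i <;> simp
    rcases h3 with h3 | h3 <;> rw [h3] at h1 h2
    · exact ⟨-n, by push_cast; linarith, by push_cast; linarith⟩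
    · exact ⟨-n - 1, by push_cast; linarith, by push_cast; linarith⟩

lemma ell_int (i : Fin 3) (x : ℝ × ℝ) (hx : tmk x ∈ PosC i) (hx2 : tmk x ∈ NegC i) :
    ∃ n : ℤ, ell i x = n := by
  rw [negC_iff, ← tmk_neg] at hx2
  obtain ⟨n, h1, h2⟩ := ell_posC i _ hx
  obtain ⟨m, h3, h4⟩ := ell_posC i _ hx2
  rw [map_neg] at h3 h4
  have a1 : 2 * n ≤ -(2 * m) := by
    exact_mod_cast (by linarith : (2 * n : ℝ) ≤ -(2 * m))
  have a2 : -(2 * m + 1) ≤ 2 * n + 1 := by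
    exact_mod_cast (by linarith : (-(2 * m + 1) : ℝ) ≤ 2 * n + 1)
  have a3 : n = -m ∨ n = -m - 1 := by omega
  rcases a3 with rfl | rfl
  · exact ⟨-(2 * m), by push_cast at *; linarith⟩
  · exact ⟨-(2 * m) - 1, by push_cast at *; linarith⟩

lemma tmk_cont : Continuous tmk := continuous_quot_mk

lemma pos_neg_disj (i : Fin 3) (p : Torus) (h1 : p ∈ PosReg i) (h2 : p ∈ NegReg i) : False := by
  obtain ⟨x, rfl⟩ : ∃ x, tmk x = p := QuotientAddGroup.mk_surjective p
  have hopen : IsOpen ((fun t : ℝ => tmk (x + t • dirv i)) ⁻¹' (PosReg i ∩ NegReg i)) := by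
    apply IsOpen.preimage
    · exact tmk_cont.comp (by fun_prop)
    · exact isOpen_interior.inter isOpen_interior
  have h0 : (0 : ℝ) ∈ ((fun t : ℝ => tmk (x + t • dirv i)) ⁻¹' (PosReg i ∩ NegReg i)) := by
    simp [h1, h2]
  obtain ⟨ε, hε, hb⟩ := Metric.isOpen_iff.1 hopen 0 h0
  obtain ⟨n, hn⟩ := ell_int i x (interior_subset h1) (interior_subset h2)
  set t : ℝ := min (ε / 2) (1 / 2) with ht
  have ht0 : 0 < t := by positivity
  have ht1 : t ≤ 1 / 2 := min_le_right _ _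
  have ht2 : t ≤ ε / 2 := min_le_left _ _
  have hm : t ∈ Metric.ball (0 : ℝ) ε := by
    rw [Metric.mem_ball, Real.dist_eq, sub_zero, abs_of_pos ht0]; linarith
  have hm2 := hb hm
  obtain ⟨m, hm⟩ := ell_int i (x + t • dirv i) (interior_subset hm2.1) (interior_subset hm2.2)
  rw [map_add, map_smul, ell_dirv, hn, smul_eq_mul, mul_one] at hm
  have b1 : n < m := by exact_mod_cast (by linarith : (n : ℝ) < m)
  have b2 : m < n + 1 := by exact_mod_cast (by linarith : (m : ℝ) < n + 1)
  omega

lemma tri_shift (α β : Fin 4) (a : ℝ) (v : ℝ × ℝ)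
    (h : ∀ x ∈ triVerts α, a • x + v ∈ triVerts β) (x : ℝ × ℝ)
    (hx : x ∈ convexHull ℝ (triVerts α)) : a • x + v ∈ convexHull ℝ (triVerts β) := by
  have hc : Convex ℝ ((fun x => a • x + v) ⁻¹' convexHull ℝ (triVerts β)) := by
    have := (convex_convexHull ℝ (triVerts β)).affine_preimage
      (a • AffineMap.id ℝ (ℝ × ℝ) + AffineMap.const ℝ (ℝ × ℝ) v)
    exact this
  have hsub : triVerts α ⊆ (fun x => a • x + v) ⁻¹' convexHull ℝ (triVerts β) :=
    fun z hz => subset_convexHull ℝ (triVerts β) (h z hz)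
  exact convexHull_min hsub hc hx

lemma shift_pp (α β : Fin 4) (w : ℝ × ℝ) (m n : ℤ)
    (h : ∀ x ∈ triVerts α,
      x + (w + m • ((2 : ℝ), (0 : ℝ)) + n • ((1 : ℝ), -Real.sqrt 3)) ∈ triVerts β)
    (p : Torus) (hp : p ∈ TriA α) : p + tmk w ∈ TriA β := by
  obtain ⟨x, hx, rfl⟩ := hp
  rw [tmk_eq_of w _ m n rfl, ← tmk_add]
  refine ⟨_, ?_, rfl⟩
  have := tri_shift α β 1 _ (by simpa only [one_smul] using h) x hx
  simpa only [one_smul] using this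

lemma shift_pn (α β : Fin 4) (w : ℝ × ℝ) (m n : ℤ)
    (h : ∀ x ∈ triVerts α,
      -(x + (w + m • ((2 : ℝ), (0 : ℝ)) + n • ((1 : ℝ), -Real.sqrt 3))) ∈ triVerts β)
    (p : Torus) (hp : p ∈ TriA α) : -(p + tmk w) ∈ TriA β := by
  obtain ⟨x, hx, rfl⟩ := hp
  rw [tmk_eq_of w _ m n rfl, ← tmk_add, ← tmk_neg]
  refine ⟨_, ?_, rfl⟩
  have := tri_shift α β (-1) (-(w + m • ((2 : ℝ), (0 : ℝ)) + n • ((1 : ℝ), -Real.sqrt 3)))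
    (by simpa only [neg_smul, one_smul, neg_add] using h) x hx
  simpa only [neg_smul, one_smul, neg_add] using this

lemma shift_nn (α β : Fin 4) (w : ℝ × ℝ) (m n : ℤ)
    (h : ∀ x ∈ triVerts α,
      x + -(w + m • ((2 : ℝ), (0 : ℝ)) + n • ((1 : ℝ), -Real.sqrt 3)) ∈ triVerts β)
    (p : Torus) (hp : -p ∈ TriA α) : -(p + tmk w) ∈ TriA β := by
  obtain ⟨x, hx, hxp⟩ := hp
  rw [tmk_eq_of w _ m n rfl, neg_add, ← hxp, ← tmk_neg, ← tmk_add]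
  refine ⟨_, ?_, rfl⟩
  have := tri_shift α β 1 _ (by simpa only [one_smul] using h) x hx
  simpa only [one_smul] using this

lemma swap_0 (p : Torus) (hp : p ∈ PosC 0) : p + tmk (om 1) ∈ NegC 0 := by
  rw [mem_posC] at hp
  rw [mem_negC]
  rcases hp with ⟨α, hα, hp⟩ | hp
  · fin_cases α
    · exact Or.inr ⟨2, by decide, shift_pn 0 2 _ (0) (1) (by
        intro x hx
        simp only [triVerts, Set.mem_insert_iff, Set.mem_singleton_iff] at hx ⊢
        rcases hx with rfl | rfl | rfl <;> simp [om, Prod.ext_iff] <;> norm_num <;> ring_nf) p hp⟩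
    · exact Or.inl (shift_pp 1 3 _ (0) (1) (by
        intro x hx
        simp only [triVerts, Set.mem_insert_iff, Set.mem_singleton_iff] at hx ⊢
        rcases hx with rfl | rfl | rfl <;> simp [om, Prod.ext_iff] <;> norm_num <;> ring_nf) p hp)
    · exact Or.inr ⟨0, by decide, shift_pn 2 0 _ (0) (1) (by
        intro x hx
        simp only [triVerts, Set.mem_insert_iff, Set.mem_singleton_iff] at hx ⊢
        rcases hx with rfl | rfl | rfl <;> simp [om, Prod.ext_iff] <;> norm_num <;> ring_nf) p hp⟩
    · exact absurd rfl hα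
  · exact Or.inr ⟨1, by decide, shift_nn 3 1 _ (0) (1) (by
        intro x hx
        simp only [triVerts, Set.mem_insert_iff, Set.mem_singleton_iff] at hx ⊢
        rcases hx with rfl | rfl | rfl <;> simp [om, Prod.ext_iff] <;> norm_num <;> ring_nf) p hp⟩

lemma swap_1 (p : Torus) (hp : p ∈ PosC 1) : p + tmk (om 2) ∈ NegC 1 := by
  rw [mem_posC] at hp
  rw [mem_negC]
  rcases hp with ⟨α, hα, hp⟩ | hp
  · fin_cases α
    · exact Or.inr ⟨1, by decide, shift_pn 0 1 _ (1) (0) (by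
        intro x hx
        simp only [triVerts, Set.mem_insert_iff, Set.mem_singleton_iff] at hx ⊢
        rcases hx with rfl | rfl | rfl <;> simp [om, Prod.ext_iff] <;> norm_num <;> ring_nf) p hp⟩
    · exact Or.inr ⟨0, by decide, shift_pn 1 0 _ (1) (0) (by
        intro x hx
        simp only [triVerts, Set.mem_insert_iff, Set.mem_singleton_iff] at hx ⊢
        rcases hx with rfl | rfl | rfl <;> simp [om, Prod.ext_iff] <;> norm_num <;> ring_nf) p hp⟩
    · exact absurd rfl hα
    · exact Or.inl (shift_pp 3 2 _ (1) (-1) (by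
        intro x hx
        simp only [triVerts, Set.mem_insert_iff, Set.mem_singleton_iff] at hx ⊢
        rcases hx with rfl | rfl | rfl <;> simp [om, Prod.ext_iff] <;> norm_num <;> ring_nf) p hp)
  · exact Or.inr ⟨3, by decide, shift_nn 2 3 _ (1) (-1) (by
        intro x hx
        simp only [triVerts, Set.mem_insert_iff, Set.mem_singleton_iff] at hx ⊢
        rcases hx with rfl | rfl | rfl <;> simp [om, Prod.ext_iff] <;> norm_num <;> ring_nf) p hp⟩

lemma swap_2 (p : Torus) (hp : p ∈ PosC 2) : p + tmk (om 0) ∈ NegC 2 := by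
  rw [mem_posC] at hp
  rw [mem_negC]
  rcases hp with ⟨α, hα, hp⟩ | hp
  · fin_cases α
    · exact Or.inr ⟨3, by decide, shift_pn 0 3 _ (0) (0) (by
        intro x hx
        simp only [triVerts, Set.mem_insert_iff, Set.mem_singleton_iff] at hx ⊢
        rcases hx with rfl | rfl | rfl <;> simp [om, Prod.ext_iff] <;> norm_num <;> ring_nf) p hp⟩
    · exact absurd rfl hα
    · exact Or.inl (shift_pp 2 1 _ (-1) (0) (by
        intro x hx
        simp only [triVerts, Set.mem_insert_iff, Set.mem_singleton_iff] at hx ⊢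
        rcases hx with rfl | rfl | rfl <;> simp [om, Prod.ext_iff] <;> norm_num <;> ring_nf) p hp)
    · exact Or.inr ⟨0, by decide, shift_pn 3 0 _ (0) (0) (by
        intro x hx
        simp only [triVerts, Set.mem_insert_iff, Set.mem_singleton_iff] at hx ⊢
        rcases hx with rfl | rfl | rfl <;> simp [om, Prod.ext_iff] <;> norm_num <;> ring_nf) p hp⟩
  · exact Or.inr ⟨2, by decide, shift_nn 1 2 _ (-1) (0) (by
        intro x hx
        simp only [triVerts, Set.mem_insert_iff, Set.mem_singleton_iff] at hx ⊢
        rcases hx with rfl | rfl | rfl <;> simp [om, Prod.ext_iff] <;> norm_num <;> ring_nf) p hp⟩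

lemma om_two (j : Fin 3) : tmk (om j) + tmk (om j) = 0 := by
  rw [← tmk_add]
  symm
  fin_cases j
  · exact tmk_eq_of 0 _ 1 0 (by simp [om, Prod.ext_iff]; norm_num)
  · exact tmk_eq_of 0 _ 0 (-1) (by simp [om, Prod.ext_iff] <;> norm_num)
  · exact tmk_eq_of 0 _ (-1) 1 (by simp [om, Prod.ext_iff]; norm_num)

lemma om_neg (j : Fin 3) : -tmk (om j) = tmk (om j) := neg_eq_of_add_eq_zero_left (om_two j)

lemma om_sum (i : Fin 3) : tmk (om (i + 2)) = tmk (om i) + tmk (om (i + 1)) := by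
  rw [← om_neg, ← tmk_neg, ← tmk_add]
  congr 1
  fin_cases i <;> simp [om, Prod.ext_iff] <;> norm_num <;> ring

lemma swapPN (i : Fin 3) (p : Torus) (hp : p ∈ PosC i) : p + tmk (om (i + 1)) ∈ NegC i := by
  fin_cases i
  · exact swap_0 p hp
  · exact swap_1 p hp
  · exact swap_2 p hp

lemma swapNP (i : Fin 3) (p : Torus) (hp : p ∈ NegC i) : p + tmk (om (i + 1)) ∈ PosC i := by
  rw [negC_iff] at hp
  have := swapPN i _ hp
  rw [negC_iff, neg_add, neg_neg, om_neg] at this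
  exact this

lemma interior_shift (A B : Set Torus) (w : Torus) (hw : w + w = 0)
    (h : ∀ p ∈ B, p + w ∈ A) (p : Torus) (hp : p ∈ interior B) :
    p + w ∈ interior A := by
  have hs : (fun q => q + w) ⁻¹' interior B ⊆ A := by
    intro q hq
    have := h _ (interior_subset hq)
    rwa [add_assoc, hw, add_zero] at this
  have ho : IsOpen ((fun q => q + w) ⁻¹' interior B) :=
    isOpen_interior.preimage (continuous_add_const w)
  apply interior_maximal hs ho
  show p + w + w ∈ interior B
  rwa [add_assoc, hw, add_zero]

lemma step (s : ℝ) (i : Fin 3) (p : Torus) (hp : fIDef i p) :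
    fI (1 - s) i (p + tmk (om (i + 1))) = fI s i p + tmk (om (i + 2)) := by
  have e : tmk ((1 - s) • om i) = tmk (om i) - tmk (s • om i) := by
    rw [← tmk_sub, sub_smul, one_smul]
  rcases hp with hp | hp
  · have h1 : p + tmk (om (i + 1)) ∈ NegReg i :=
      interior_shift (NegC i) (PosC i) _ (om_two _) (swapPN i) p hp
    have h2 : p + tmk (om (i + 1)) ∉ PosReg i := fun h => pos_neg_disj i _ h h1
    rw [fI, fI, if_pos hp, if_neg h2, e, om_sum]
    nth_rewrite 1 [← om_neg i]
    abel
  · have h1 : p + tmk (om (i + 1)) ∈ PosReg i :=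
      interior_shift (PosC i) (NegC i) _ (om_two _) (swapNP i) p hp
    have h2 : p ∉ PosReg i := fun h => pos_neg_disj i _ h hp
    rw [fI, fI, if_pos h1, if_neg h2, e, om_sum]
    abel

/-- For s ∈ [1/2,1), the tetrahedral PET f̃ₛ is conjugate
to f̃₁₋ₛ by the translation φ of the torus induced by (x,y) ↦ (x+1/2, y−√3/2):
wherever both sides are defined, φ(f̃ₛ(p)) = f̃₁₋ₛ(φ(p)), i.e. f̃ₛ = φ⁻¹ ∘ f̃₁₋ₛ ∘ φ. -/
theorem stmt_1 (s : ℝ) (hs : s ∈ Set.Ico (1/2 : ℝ) 1)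
    (φ : Torus → Torus)
    (hφ : ∀ p : Torus, φ p = p + tmk ((1/2 : ℝ), -Real.sqrt 3 / 2)) :
    ∀ p : Torus, fSDef s p → fSDef (1 - s) (φ p) →
      φ (fS s p) = fS (1 - s) (φ p) := by
  intro p hp _
  obtain ⟨h0, h1, h2⟩ := hp
  have hw : tmk ((1/2 : ℝ), -Real.sqrt 3 / 2) = tmk (om 1) := by
    rw [← om_neg, ← tmk_neg]
    congr 1
    simp [om, Prod.ext_iff]
    constructor <;> ring
  have e0 := step s 0 p h0
  have e1 := step s 1 _ h1
  have e2 := step s 2 _ h2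
  rw [hφ, hφ, hw]
  show fI s 2 (fI s 1 (fI s 0 p)) + tmk (om 1)
    = fI (1 - s) 2 (fI (1 - s) 1 (fI (1 - s) 0 (p + tmk (om 1))))
  have f0 : fI (1 - s) 0 (p + tmk (om 1)) = fI s 0 p + tmk (om 2) := e0
  have f1 : fI (1 - s) 1 (fI s 0 p + tmk (om 2)) = fI s 1 (fI s 0 p) + tmk (om 0) := e1
  have f2 : fI (1 - s) 2 (fI s 1 (fI s 0 p) + tmk (om 0))
    = fI s 2 (fI s 1 (fI s 0 p)) + tmk (om 1) := e2
  rw [f0, f1, f2]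

end
end

section
/- For every s ∈ (0,1), the tetrahedral PET f̃_s is a polytope exchange transformation of the torus: there is a finite union N of line segments in Δ̃ such that f̃_s is defined and injective on Δ̃ ∖ N, the image f̃_s(Δ̃ ∖ N) has full Haar measure in Δ̃, and f̃_s preserves Haar measure (the pushforward under f̃_s of the Haar measure restricted to Δ̃ ∖ N agrees with the Haar measure of Δ̃ up to a null set). -/
open MeasureTheory
open scoped Classical

noncomputable section

instance : MeasurableSpace Torus := borel Torus

/-- A fundamental parallelogram for the lattice Λ. -/
def FundDom : Set (ℝ × ℝ) :=
  (fun q : ℝ × ℝ => q.1 • ((2 : ℝ), (0 : ℝ)) + q.2 • ((1 : ℝ), -Real.sqrt 3)) ''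
    (Set.Ico (0 : ℝ) 1 ×ˢ Set.Ico (0 : ℝ) 1)

/-- Haar (Lebesgue) measure on the torus Δ̃, as the pushforward of Lebesgue measure
on a fundamental parallelogram. -/
def haarT : Measure Torus := Measure.map tmk (volume.restrict FundDom)

instance : BorelSpace Torus := ⟨rfl⟩

/-- coefficient of x in the functional K_i -/
def kA : Fin 3 → ℝ
  | 0 => 0
  | 1 => -1
  | 2 => -1

/-- coefficient of y in the functional K_i -/
def kB : Fin 3 → ℝ
  | 0 => 2 / Real.sqrt 3
  | 1 => -(1 / Real.sqrt 3)
  | 2 => 1 / Real.sqrt 3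

/-- the linear functional K_i, vanishing on ω_i and mapping the lattice into 2ℤ -/
def K (i : Fin 3) : ℝ × ℝ →ₗ[ℝ] ℝ := kA i • LinearMap.fst ℝ ℝ ℝ + kB i • LinearMap.snd ℝ ℝ ℝ

/-- half of a lattice vector with K_i = 1 -/
def wv : Fin 3 → ℝ × ℝ
  | 0 => ((-1/2 : ℝ), Real.sqrt 3 / 2)
  | 1 => ((-1 : ℝ), (0 : ℝ))
  | 2 => ((-1 : ℝ), (0 : ℝ))

lemma K_apply (i : Fin 3) (x : ℝ × ℝ) : K i x = kA i * x.1 + kB i * x.2 := by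
  simp [K]

lemma sqrt3_pos : (0 : ℝ) < Real.sqrt 3 := by positivity

lemma K_om (i : Fin 3) : K i (om i) = 0 := by
  have := sqrt3_pos
  fin_cases i <;> simp [K_apply, kA, kB, om] <;> field_simp <;> norm_num

lemma K_wv (i : Fin 3) : K i (wv i) = 1 := by
  have := sqrt3_pos
  fin_cases i <;> simp [K_apply, kA, kB, wv]

lemma mem_TetLat (x : ℝ × ℝ) : x ∈ TetLat ↔
    ∃ m n : ℤ, x = (2 * (m : ℝ) + n, -((n : ℝ) * Real.sqrt 3)) := by
  unfold TetLat
  rw [AddSubgroup.mem_closure_pair]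
  constructor
  · rintro ⟨m, n, rfl⟩
    refine ⟨m, n, ?_⟩
    ext <;> simp <;> ring
  · rintro ⟨m, n, rfl⟩
    refine ⟨m, n, ?_⟩
    ext <;> simp <;> ring

lemma two_om_mem (i : Fin 3) : (2 : ℝ) • om i ∈ TetLat := by
  rw [mem_TetLat]
  fin_cases i
  · exact ⟨1, 0, by ext <;> simp [om]⟩
  · exact ⟨0, -1, by ext <;> simp [om] <;> ring⟩
  · exact ⟨-1, 1, by ext <;> simp [om] <;> ring⟩

lemma two_wv_mem (i : Fin 3) : (2 : ℝ) • wv i ∈ TetLat := by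
  rw [mem_TetLat]
  fin_cases i
  · exact ⟨0, -1, by ext <;> simp [wv] <;> ring⟩
  · exact ⟨-1, 0, by ext <;> simp [wv]⟩
  · exact ⟨-1, 0, by ext <;> simp [wv]⟩

lemma K_lat (i : Fin 3) {x : ℝ × ℝ} (hx : x ∈ TetLat) : ∃ k : ℤ, K i x = 2 * k := by
  have := sqrt3_pos
  obtain ⟨m, n, rfl⟩ := (mem_TetLat x).1 hx
  fin_cases i
  · exact ⟨-n, by simp [K_apply, kA, kB]; field_simp⟩
  · exact ⟨-m, by simp [K_apply, kA, kB]; field_simp; ring⟩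
  · exact ⟨-m - n, by simp [K_apply, kA, kB]; field_simp; ring⟩

lemma decomp (i : Fin 3) (x : ℝ × ℝ) : ∃ t : ℝ, x = K i x • wv i + t • om i := by
  have := sqrt3_pos
  fin_cases i
  · refine ⟨x.1 + x.2 / Real.sqrt 3, ?_⟩
    ext <;> simp [K_apply, kA, kB, wv, om] <;> field_simp <;> ring
  · refine ⟨2 * x.2 / Real.sqrt 3, ?_⟩
    ext <;> simp [K_apply, kA, kB, wv, om] <;> field_simp <;> ring
  · refine ⟨- 2 * x.2 / Real.sqrt 3, ?_⟩
    ext <;> simp [K_apply, kA, kB, wv, om] <;> field_simp <;> ring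

lemma tmk_eq {x y : ℝ × ℝ} : tmk x = tmk y ↔ ∃ l ∈ TetLat, y = x + l := by
  unfold tmk
  rw [QuotientAddGroup.eq]
  constructor
  · intro h; exact ⟨_, h, by abel⟩
  · rintro ⟨l, hl, rfl⟩; simpa using hl

lemma tmk_surj : Function.Surjective tmk := QuotientAddGroup.mk_surjective

lemma tmk_add_lat (x : ℝ × ℝ) {l : ℝ × ℝ} (hl : l ∈ TetLat) : tmk (x + l) = tmk x :=
  (tmk_eq.2 ⟨l, hl, rfl⟩).symm

lemma tmk_open : IsOpenMap tmk := QuotientAddGroup.isOpenMap_coe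

lemma K_cont (i : Fin 3) : Continuous (K i) := by
  have : (K i : ℝ × ℝ → ℝ) = fun x => kA i * x.1 + kB i * x.2 := funext (K_apply i)
  rw [this]; fun_prop

lemma int_smul_mem {l : ℝ × ℝ} (hl : l ∈ TetLat) (n : ℤ) : ((n : ℝ)) • l ∈ TetLat := by
  rw [Int.cast_smul_eq_zsmul]
  exact AddSubgroup.zsmul_mem _ hl n

/-- normal form of a lift -/
lemma lift_exists (i : Fin 3) (x : ℝ × ℝ) (m : ℤ) : ∃ t : ℝ, t ∈ Set.Icc (-1 : ℝ) 1 ∧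
    tmk x = tmk ((K i x - 2 * m) • wv i + t • om i) := by
  obtain ⟨t, ht⟩ := decomp i x
  let n : ℤ := ⌊(t + 1) / 2⌋
  refine ⟨t - 2 * n, ⟨?_, ?_⟩, ?_⟩
  · have := Int.floor_le ((t + 1) / 2)
    show -1 ≤ t - 2 * ((⌊(t + 1) / 2⌋ : ℤ) : ℝ)
    linarith
  · have := Int.lt_floor_add_one ((t + 1) / 2)
    show t - 2 * ((⌊(t + 1) / 2⌋ : ℤ) : ℝ) ≤ 1
    linarith
  · rw [tmk_eq]
    refine ⟨((-m : ℤ) : ℝ) • ((2 : ℝ) • wv i) + ((-n : ℤ) : ℝ) • ((2 : ℝ) • om i),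
      add_mem (int_smul_mem (two_wv_mem i) _) (int_smul_mem (two_om_mem i) _), ?_⟩
    conv_rhs => rw [ht]
    push_cast
    module

/-- the circle {K_i = r mod 2} in the torus -/
def circ (i : Fin 3) (r : ℝ) : Set Torus := {p | ∃ x, tmk x = p ∧ ∃ m : ℤ, K i x = r + 2 * m}

lemma mem_circ_tmk (i : Fin 3) (r : ℝ) (x : ℝ × ℝ) :
    tmk x ∈ circ i r ↔ ∃ m : ℤ, K i x = r + 2 * m := by
  constructor
  · rintro ⟨y, hy, m, hm⟩
    obtain ⟨l, hl, rfl⟩ := tmk_eq.1 hy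
    obtain ⟨k, hk⟩ := K_lat i hl
    exact ⟨m + k, by rw [map_add, hm, hk]; push_cast; ring⟩
  · rintro h; exact ⟨x, rfl, h⟩

lemma circ_eq_seg (i : Fin 3) (r : ℝ) :
    circ i r = tmk '' segment ℝ (r • wv i - om i) (r • wv i + om i) := by
  ext p
  constructor
  · rintro ⟨x, rfl, m, hm⟩
    obtain ⟨t, ⟨h1, h2⟩, h⟩ := lift_exists i x m
    rw [h]
    refine ⟨_, ?_, rfl⟩
    refine ⟨(1 - t) / 2, (1 + t) / 2, by linarith, by linarith, by ring, ?_⟩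
    rw [hm]
    module
  · rintro ⟨x, ⟨a, b, ha, hb, hab, rfl⟩, rfl⟩
    refine ⟨_, rfl, 0, ?_⟩
    simp only [map_add, map_sub, map_smul, K_om, K_wv, smul_eq_mul]
    push_cast
    linear_combination r * hab

lemma circ_preimage (i : Fin 3) (r : ℝ) :
    tmk ⁻¹' circ i r = ⋃ m : ℤ, (K i) ⁻¹' {r + 2 * (m : ℝ)} := by
  ext x
  simp [mem_circ_tmk]

lemma line_null (i : Fin 3) (c : ℝ) : volume ((K i) ⁻¹' {c} : Set (ℝ × ℝ)) = 0 := by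
  have h : ((K i) ⁻¹' {c} : Set (ℝ × ℝ)) =
      (fun x => x + (-(c • wv i))) ⁻¹' ((LinearMap.ker (K i) : Submodule ℝ (ℝ × ℝ)) : Set (ℝ × ℝ)) := by
    ext x
    simp only [Set.mem_preimage, Set.mem_singleton_iff, SetLike.mem_coe, LinearMap.mem_ker, map_add,
      map_neg, map_smul, K_wv, smul_eq_mul]
    constructor <;> intro h <;> linarith
  rw [h, measure_preimage_add_right]
  apply Measure.addHaar_submodule
  intro h
  have : wv i ∈ LinearMap.ker (K i) := by rw [h]; trivial
  rw [LinearMap.mem_ker, K_wv] at this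
  exact one_ne_zero this

lemma circ_closed (i : Fin 3) (r : ℝ) : IsClosed (circ i r) := by
  have hq : Topology.IsQuotientMap tmk := isQuotientMap_quot_mk
  rw [← hq.isClosed_preimage]
  have : tmk ⁻¹' circ i r = (fun x => (K i x - r) / 2) ⁻¹' (Set.range ((↑) : ℤ → ℝ)) := by
    ext x
    simp only [Set.mem_preimage, mem_circ_tmk, Set.mem_range]
    constructor <;> rintro ⟨m, hm⟩ <;> exact ⟨m, by linarith⟩
  rw [this]
  apply IsClosed.preimage
  · have := K_cont i
    fun_prop
  · exact Int.isClosedEmbedding_coe_real.isClosed_range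

lemma circ_null (i : Fin 3) (r : ℝ) : haarT (circ i r) = 0 := by
  unfold haarT
  rw [Measure.map_apply tmk_cont.measurable (circ_closed i r).measurableSet]
  apply nonpos_iff_eq_zero.1
  refine (Measure.restrict_apply_le _ _).trans ?_
  rw [circ_preimage]
  exact (measure_iUnion_null fun m => line_null i _).le

lemma mem_tri {a b c p : ℝ × ℝ} (u v w : ℝ) (hu : 0 ≤ u) (hv : 0 ≤ v) (hw : 0 ≤ w)
    (h : u + v + w = 1) (hp : p = u • a + v • b + w • c) :
    p ∈ convexHull ℝ ({a, b, c} : Set (ℝ × ℝ)) := by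
  have hc := convex_convexHull ℝ ({a, b, c} : Set (ℝ × ℝ))
  have := hc.sum_mem (t := Finset.univ) (w := ![u, v, w]) (z := ![a, b, c])
    (by intro i _; fin_cases i <;> simp [hu, hv, hw])
    (by simp [Fin.sum_univ_three, h])
    (by intro i _; apply subset_convexHull; fin_cases i <;> simp)
  rw [hp]
  simpa [Fin.sum_univ_three] using this

lemma PosReg_eq (i : Fin 3) : PosReg i = interior (PosC i) := rfl

lemma PosC_of_tri {i : Fin 3} {x : ℝ × ℝ} (α : Fin 4) (hα : α ≠ opp i)
    (h : x ∈ convexHull ℝ (triVerts α)) : tmk x ∈ PosC i := by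
  left
  simp only [Set.mem_iUnion]
  exact ⟨α, hα, x, h, rfl⟩

lemma PosC_of_itri {i : Fin 3} {x : ℝ × ℝ}
    (h : -x ∈ convexHull ℝ (triVerts (opp i))) : tmk x ∈ PosC i := by
  right
  refine ⟨tmk (-x), ⟨_, h, rfl⟩, ?_⟩
  simp [iot, tmk_neg]

lemma strip_sub (i : Fin 3) (k t : ℝ) (hk : k ∈ Set.Icc (0 : ℝ) 1) (ht : t ∈ Set.Icc (-1 : ℝ) 1) :
    tmk (k • wv i + t • om i) ∈ PosC i := by
  obtain ⟨hk0, hk1⟩ := hk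
  obtain ⟨ht0, ht1⟩ := ht
  fin_cases i
  · show tmk (k • wv 0 + t • om 0) ∈ PosC 0
    rcases le_total t 0 with h0 | h0
    · rcases le_total t (-1 + k) with h1 | h1
      · refine PosC_of_tri 1 (by decide) ?_
        refine mem_tri (1 - k) (t + 1) (k - 1 - t) ?_ ?_ ?_ ?_ ?_
        all_goals first | linarith | skip
        ext <;> simp [wv, om] <;> ring
      · refine PosC_of_tri 0 (by decide) ?_
        refine mem_tri (-t) k (1 + t - k) ?_ ?_ ?_ ?_ ?_
        all_goals first | linarith | skip
        ext <;> simp [wv, om] <;> ring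
    · rcases le_total t k with h1 | h1
      · refine PosC_of_tri 2 (by decide) ?_
        refine mem_tri (k - t) (1 - k) t ?_ ?_ ?_ ?_ ?_
        all_goals first | linarith | skip
        ext <;> simp [wv, om] <;> ring
      · refine PosC_of_itri ?_
        refine mem_tri (t - k) (1 - t) k ?_ ?_ ?_ ?_ ?_
        all_goals first | linarith | skip
        ext <;> simp [wv, om] <;> ring
  · show tmk (k • wv 1 + t • om 1) ∈ PosC 1
    rcases le_total t 0 with h0 | h0
    · rcases le_total t (-k) with h1 | h1
      · refine PosC_of_itri ?_
        refine mem_tri (-t - k) (1 + t) k ?_ ?_ ?_ ?_ ?_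
        all_goals first | linarith | skip
        ext <;> simp [wv, om] <;> ring
      · refine PosC_of_tri 3 (by decide) ?_
        refine mem_tri (k + t) (1 - k) (-t) ?_ ?_ ?_ ?_ ?_
        all_goals first | linarith | skip
        ext <;> simp [wv, om] <;> ring
    · rcases le_total t (1 - k) with h1 | h1
      · refine PosC_of_tri 0 (by decide) ?_
        refine mem_tri k t (1 - k - t) ?_ ?_ ?_ ?_ ?_
        all_goals first | linarith | skip
        ext <;> simp [wv, om] <;> ring
      · refine PosC_of_tri 1 (by decide) ?_
        refine mem_tri (1 - t) (1 - k) (k + t - 1) ?_ ?_ ?_ ?_ ?_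
        all_goals first | linarith | skip
        ext <;> simp [wv, om] <;> ring
  · show tmk (k • wv 2 + t • om 2) ∈ PosC 2
    rcases le_total t 0 with h0 | h0
    · rcases le_total t (-k) with h1 | h1
      · refine PosC_of_tri 2 (by decide) ?_
        refine mem_tri k (1 + t) (-t - k) ?_ ?_ ?_ ?_ ?_
        all_goals first | linarith | skip
        ext <;> simp [wv, om] <;> ring
      · refine PosC_of_tri 0 (by decide) ?_
        refine mem_tri (k + t) (-t) (1 - k) ?_ ?_ ?_ ?_ ?_
        all_goals first | linarith | skip
        ext <;> simp [wv, om] <;> ring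
    · rcases le_total t (1 - k) with h1 | h1
      · refine PosC_of_tri 3 (by decide) ?_
        refine mem_tri k (1 - k - t) t ?_ ?_ ?_ ?_ ?_
        all_goals first | linarith | skip
        ext <;> simp [wv, om] <;> ring
      · have e : tmk (k • wv 2 + t • om 2) = tmk (k • wv 2 + t • om 2 + -((2 : ℝ) • wv 2)) :=
          (tmk_add_lat _ (neg_mem (two_wv_mem 2))).symm
        rw [e]
        refine PosC_of_itri ?_
        refine mem_tri (1 - t) (t + k - 1) (1 - k) ?_ ?_ ?_ ?_ ?_
        all_goals first | linarith | skip
        ext <;> simp [wv, om] <;> ring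

lemma strip_sub' (i : Fin 3) (x : ℝ × ℝ) (m : ℤ) (hx : K i x - 2 * m ∈ Set.Icc (0 : ℝ) 1) :
    tmk x ∈ PosC i := by
  obtain ⟨t, ht, h⟩ := lift_exists i x m
  rw [h]
  exact strip_sub i _ t hx ht

lemma tri_bd (i : Fin 3) (c d : ℝ) (V : Set (ℝ × ℝ)) (hV : ∀ v ∈ V, K i v ∈ Set.Icc c d)
    {x : ℝ × ℝ} (hx : x ∈ convexHull ℝ V) : K i x ∈ Set.Icc c d := by
  have : convexHull ℝ V ⊆ (K i) ⁻¹' Set.Icc c d :=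
    convexHull_min hV ((convex_Icc c d).linear_preimage (K i))
  exact this hx

lemma PosC_sub (i : Fin 3) (x : ℝ × ℝ) (h : tmk x ∈ PosC i) :
    ∃ m : ℤ, K i x - 2 * m ∈ Set.Icc (0 : ℝ) 1 := by
  have h3 := sqrt3_pos
  have key : ∃ y, tmk y = tmk x ∧ ∃ m : ℤ, K i y ∈ Set.Icc (2 * m : ℝ) (2 * m + 1) := by
    rcases h with h | h
    · simp only [Set.mem_iUnion] at h
      obtain ⟨α, hα, y, hy, e⟩ := h
      refine ⟨y, e, 0, ?_⟩
      refine tri_bd i _ _ _ ?_ hy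
      fin_cases i <;> fin_cases α <;>
        first
        | exact absurd rfl hα
        | (intro v hv
           rcases hv with rfl | rfl | rfl <;> simp [K_apply, kA, kB] <;> field_simp <;> norm_num)
    · obtain ⟨_, ⟨y, hy, rfl⟩, e⟩ := h
      refine ⟨-y, e, ?_⟩
      have hk : ∃ m : ℤ, K i y ∈ Set.Icc (-(2 * m + 1) : ℝ) (-(2 * m)) := by
        fin_cases i
        · refine ⟨0, tri_bd _ _ _ _ ?_ hy⟩
          intro v hv
          rcases hv with rfl | rfl | rfl <;> simp [K_apply, kA, kB] <;> field_simp <;> norm_num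
        · refine ⟨0, tri_bd _ _ _ _ ?_ hy⟩
          intro v hv
          rcases hv with rfl | rfl | rfl <;> simp [K_apply, kA, kB] <;> field_simp <;> norm_num
        · refine ⟨-1, tri_bd _ _ _ _ ?_ hy⟩
          intro v hv
          rcases hv with rfl | rfl | rfl <;> simp [K_apply, kA, kB] <;> field_simp <;> norm_num
      obtain ⟨m, h1, h2⟩ := hk
      exact ⟨m, by rw [map_neg]; constructor <;> linarith⟩
  obtain ⟨y, e, m, h1, h2⟩ := key
  obtain ⟨l, hl, rfl⟩ := tmk_eq.1 e
  obtain ⟨k, hk⟩ := K_lat i hl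
  refine ⟨m + k, ?_⟩
  rw [map_add, hk]
  push_cast
  constructor <;> linarith

lemma PosC_iff (i : Fin 3) (x : ℝ × ℝ) : tmk x ∈ PosC i ↔
    ∃ m : ℤ, K i x - 2 * m ∈ Set.Icc (0 : ℝ) 1 :=
  ⟨PosC_sub i x, fun ⟨m, hm⟩ => strip_sub' i x m hm⟩

lemma PosC_inv (i : Fin 3) (t : ℝ) (p : Torus) : p + tmk (t • om i) ∈ PosC i ↔ p ∈ PosC i := by
  obtain ⟨x, rfl⟩ := tmk_surj p
  rw [← tmk_add, PosC_iff, PosC_iff]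
  simp [K_om]

lemma PosReg_inv (i : Fin 3) (t : ℝ) (p : Torus) :
    p + tmk (t • om i) ∈ PosReg i ↔ p ∈ PosReg i := by
  have h : (Homeomorph.addRight (tmk (t • om i))) ⁻¹' PosC i = PosC i := by
    ext q; exact PosC_inv i t q
  have h2 := (Homeomorph.addRight (tmk (t • om i))).preimage_interior (PosC i)
  rw [h] at h2
  rw [PosReg_eq]
  conv_rhs => rw [← h2]
  rfl

lemma fIDef_of (i : Fin 3) (p : Torus) (h0 : p ∉ circ i 0) (h1 : p ∉ circ i 1) : fIDef i p := by
  obtain ⟨x, rfl⟩ := tmk_surj p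
  rw [mem_circ_tmk] at h0 h1
  push Not at h0 h1
  have hf1 := Int.floor_le (K i x / 2)
  have hf2 := Int.lt_floor_add_one (K i x / 2)
  set m := ⌊K i x / 2⌋ with hm
  have h0m := h0 m
  have h1m := h1 m
  have hKc := K_cont i
  rcases lt_or_ge (K i x - 2 * m) 1 with h | h
  · left
    have hpos : 0 < K i x - 2 * m := lt_of_le_of_ne (by linarith) (fun e => h0m (by linarith))
    rw [PosReg_eq, mem_interior]
    refine ⟨tmk '' {y | 0 < K i y - 2 * m ∧ K i y - 2 * m < 1}, ?_, ?_, ⟨x, ⟨hpos, h⟩, rfl⟩⟩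
    · rintro _ ⟨y, ⟨hy1, hy2⟩, rfl⟩
      exact strip_sub' i y m ⟨hy1.le, hy2.le⟩
    · apply tmk_open
      have hc : Continuous fun y => K i y - 2 * (m : ℝ) := by fun_prop
      exact (isOpen_lt continuous_const hc).inter (isOpen_lt hc continuous_const)
  · right
    have hpos : 1 < K i x - 2 * m := lt_of_le_of_ne h (fun e => h1m (by linarith))
    unfold NegReg
    rw [mem_interior]
    refine ⟨tmk '' {y | 1 < K i y - 2 * m ∧ K i y - 2 * m < 2}, ?_, ?_,
      ⟨x, ⟨hpos, by linarith⟩, rfl⟩⟩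
    · rintro _ ⟨y, ⟨hy1, hy2⟩, rfl⟩
      have := strip_sub' i (-y) (-m - 1) (by
        rw [map_neg]; push_cast; constructor <;> linarith)
      rcases this with h | h
      · right
        simp only [Set.mem_iUnion] at h ⊢
        obtain ⟨α, hα, h⟩ := h
        exact ⟨α, hα, _, h, by simp [iot, tmk_neg]⟩
      · left
        obtain ⟨q, hq, e⟩ := h
        have : q = tmk y := by
          rw [tmk_neg] at e
          exact neg_injective e
        rwa [← this]
    · apply tmk_open
      have hc : Continuous fun y => K i y - 2 * (m : ℝ) := by fun_prop
      exact (isOpen_lt continuous_const hc).inter (isOpen_lt hc continuous_const)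

lemma tmk_neg_smul (t : ℝ) (v : ℝ × ℝ) : tmk ((-t) • v) = -tmk (t • v) := by
  rw [neg_smul, tmk_neg]

lemma fI_inv (s : ℝ) (i : Fin 3) (p : Torus) : fI (-s) i (fI s i p) = p := by
  unfold fI
  by_cases h : p ∈ PosReg i
  · rw [if_pos h, if_pos ((PosReg_inv i s p).2 h), tmk_neg_smul]
    abel
  · have h2 : p - tmk (s • om i) ∉ PosReg i := by
      rw [sub_eq_add_neg, ← tmk_neg_smul, PosReg_inv]; exact h
    rw [if_neg h, if_neg h2, tmk_neg_smul]
    abel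

lemma TetLat_countable : Countable TetLat := by
  have : (TetLat : Set (ℝ × ℝ)) ⊆
      Set.range (fun q : ℤ × ℤ => ((2 * (q.1 : ℝ) + q.2, -((q.2 : ℝ) * Real.sqrt 3)) : ℝ × ℝ)) := by
    intro x hx
    obtain ⟨m, n, rfl⟩ := (mem_TetLat x).1 hx
    exact ⟨(m, n), rfl⟩
  exact ((Set.countable_range _).mono this).to_subtype

lemma mem_FundDom (x : ℝ × ℝ) : x ∈ FundDom ↔
    (x.1 + x.2 / Real.sqrt 3) / 2 ∈ Set.Ico (0 : ℝ) 1 ∧ -x.2 / Real.sqrt 3 ∈ Set.Ico (0 : ℝ) 1 := by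
  have h3 := sqrt3_pos
  constructor
  · rintro ⟨⟨a, b⟩, ⟨ha, hb⟩, rfl⟩
    have e1 : ((a * 2 + b * 1) + (a * 0 + b * (-Real.sqrt 3)) / Real.sqrt 3) / 2 = a := by
      field_simp; ring
    have e2 : -(a * 0 + b * (-Real.sqrt 3)) / Real.sqrt 3 = b := by
      field_simp; ring
    refine ⟨?_, ?_⟩
    · show ((a * 2 + b * 1) + (a * 0 + b * (-Real.sqrt 3)) / Real.sqrt 3) / 2 ∈ _
      rw [e1]; exact ha
    · show -(a * 0 + b * (-Real.sqrt 3)) / Real.sqrt 3 ∈ _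
      rw [e2]; exact hb
  · rintro ⟨h1, h2⟩
    refine ⟨(_, _), ⟨h1, h2⟩, ?_⟩
    ext <;> simp <;> field_simp
    ring

lemma FundDom_meas : MeasurableSet FundDom := by
  have : FundDom = {x : ℝ × ℝ | (x.1 + x.2 / Real.sqrt 3) / 2 ∈ Set.Ico (0 : ℝ) 1} ∩
      {x : ℝ × ℝ | -x.2 / Real.sqrt 3 ∈ Set.Ico (0 : ℝ) 1} := by
    ext x; exact mem_FundDom x
  rw [this]
  refine MeasurableSet.inter ?_ ?_
  · exact (show Measurable fun x : ℝ × ℝ => (x.1 + x.2 / Real.sqrt 3) / 2 by fun_prop)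
      measurableSet_Ico
  · exact (show Measurable fun x : ℝ × ℝ => -x.2 / Real.sqrt 3 by fun_prop) measurableSet_Ico

lemma FundDom_isFund : IsAddFundamentalDomain TetLat FundDom (volume : Measure (ℝ × ℝ)) := by
  have h3 := sqrt3_pos
  refine IsAddFundamentalDomain.mk' FundDom_meas.nullMeasurableSet ?_
  intro x
  have e1 : ∀ m n : ℤ, ((2 * (m : ℝ) + n + x.1) + (-((n : ℝ) * Real.sqrt 3) + x.2) / Real.sqrt 3) / 2
      = m + (x.1 + x.2 / Real.sqrt 3) / 2 := by
    intro m n; field_simp; ring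
  have e2 : ∀ n : ℤ, -(-((n : ℝ) * Real.sqrt 3) + x.2) / Real.sqrt 3 = n + -x.2 / Real.sqrt 3 := by
    intro n; field_simp; ring
  set a := (x.1 + x.2 / Real.sqrt 3) / 2 with ha
  set b := -x.2 / Real.sqrt 3 with hb
  have key : ∀ m n : ℤ, (((2 * (m : ℝ) + n, -((n : ℝ) * Real.sqrt 3)) : ℝ × ℝ) + x ∈ FundDom) ↔
      ((m : ℝ) + a ∈ Set.Ico (0 : ℝ) 1 ∧ (n : ℝ) + b ∈ Set.Ico (0 : ℝ) 1) := by
    intro m n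
    rw [mem_FundDom, ← e1 m n, ← e2 n]
    rfl
  have fl : ∀ (c : ℝ) (m : ℤ), (m : ℝ) + c ∈ Set.Ico (0 : ℝ) 1 ↔ m = -⌊c⌋ := by
    intro c m
    have : m = -⌊c⌋ ↔ ⌊c⌋ = -m := by omega
    rw [this, Int.floor_eq_iff]
    push_cast
    constructor
    · rintro ⟨h1, h2⟩; constructor <;> linarith
    · rintro ⟨h1, h2⟩; constructor <;> linarith
  refine ⟨⟨(2 * ((-⌊a⌋ : ℤ) : ℝ) + ((-⌊b⌋ : ℤ) : ℝ), -(((-⌊b⌋ : ℤ) : ℝ) * Real.sqrt 3)),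
    (mem_TetLat _).2 ⟨_, _, rfl⟩⟩, ?_, ?_⟩
  · exact (key _ _).2 ⟨(fl _ _).2 rfl, (fl _ _).2 rfl⟩
  · rintro ⟨g, hg⟩ h
    obtain ⟨m, n, rfl⟩ := (mem_TetLat g).1 hg
    obtain ⟨h1, h2⟩ := (key m n).1 h
    rw [fl] at h1 h2
    subst h1 h2
    rfl

open scoped Pointwise in
lemma haar_trans (t : Torus) {E : Set Torus} (hE : MeasurableSet E) :
    haarT ((fun p => p + t) ⁻¹' E) = haarT E := by
  have := TetLat_countable
  obtain ⟨v, rfl⟩ := tmk_surj t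
  have hm := tmk_cont.measurable
  have hE' : MeasurableSet ((fun p => p + tmk v) ⁻¹' E) :=
    (continuous_add_const (tmk v)).measurable hE
  unfold haarT
  rw [Measure.map_apply hm hE', Measure.map_apply hm hE, Measure.restrict_apply (hm hE'),
    Measure.restrict_apply (hm hE)]
  have hF2 : IsAddFundamentalDomain TetLat (v +ᵥ FundDom) (volume : Measure (ℝ × ℝ)) :=
    FundDom_isFund.vadd_of_comm v
  have := FundDom_isFund.measure_set_eq hF2 (A := tmk ⁻¹' E) (hm hE) (by
    rintro ⟨g, hg⟩
    ext x
    show tmk (g + x) ∈ E ↔ tmk x ∈ E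
    rw [add_comm, tmk_add_lat x hg])
  rw [this, ← measure_preimage_add volume v (tmk ⁻¹' E ∩ (v +ᵥ FundDom))]
  congr 1
  ext x
  simp only [Set.mem_inter_iff, Set.mem_preimage, Set.mem_vadd_set_iff_neg_vadd_mem, vadd_eq_add,
    neg_add_cancel_left]
  rw [add_comm v x]
  rfl

lemma fI_meas (s : ℝ) (i : Fin 3) : Measurable (fI s i) := by
  unfold fI
  refine Measurable.ite isOpen_interior.measurableSet ?_ ?_
  · exact (continuous_add_const _).measurable
  · exact (continuous_sub_right _).measurable

lemma fI_mp (s : ℝ) (i : Fin 3) : MeasurePreserving (fI s i) haarT haarT := by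
  refine ⟨fI_meas s i, ?_⟩
  ext E hE
  rw [Measure.map_apply (fI_meas s i) hE]
  have hP : MeasurableSet (PosReg i) := isOpen_interior.measurableSet
  rw [← measure_inter_add_sdiff _ hP, ← measure_inter_add_sdiff E hP]
  congr 1
  · rw [← haar_trans (tmk (s • om i)) (hE.inter hP)]
    congr 1
    ext p
    simp only [Set.mem_inter_iff, Set.mem_preimage, PosReg_inv]
    refine and_congr_left fun h => ?_
    rw [fI, if_pos h]
  · rw [← haar_trans (tmk ((-s) • om i)) (hE.diff hP)]
    congr 1
    ext p
    simp only [Set.mem_sdiff, Set.mem_preimage, PosReg_inv]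
    refine and_congr_left fun h => ?_
    rw [fI, if_neg h, tmk_neg_smul, sub_eq_add_neg]

/-- the inverse of fS -/
def gS (s : ℝ) : Torus → Torus := fI (-s) 0 ∘ fI (-s) 1 ∘ fI (-s) 2

lemma gS_fS (s : ℝ) (p : Torus) : gS s (fS s p) = p := by
  simp [gS, fS, fI_inv]

lemma fS_gS (s : ℝ) (p : Torus) : fS s (gS s p) = p := by
  have h : ∀ i p, fI s i (fI (-s) i p) = p := fun i p => by
    have := fI_inv (-s) i p
    rwa [neg_neg] at this
  simp [gS, fS, h]

lemma fS_mp (s : ℝ) : MeasurePreserving (fS s) haarT haarT :=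
  (fI_mp s 2).comp ((fI_mp s 1).comp (fI_mp s 0))

lemma gS_mp (s : ℝ) : MeasurePreserving (gS s) haarT haarT :=
  (fI_mp (-s) 0).comp ((fI_mp (-s) 1).comp (fI_mp (-s) 2))

/-- circles which have to be removed -/
def badL (s : ℝ) : List (Fin 3 × ℝ) :=
  [(0, 0), (0, 1), (1, s), (1, -s), (1, 1 + s), (1, 1 - s),
   (2, 0), (2, 1), (2, 2 * s), (2, -(2 * s)), (2, 1 + 2 * s), (2, 1 - 2 * s)]

lemma circ_shift (i j : Fin 3) (r t : ℝ) (p : Torus) (h : p + tmk (t • om j) ∈ circ i r) :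
    p ∈ circ i (r - t * K i (om j)) := by
  obtain ⟨x, rfl⟩ := tmk_surj p
  rw [← tmk_add, mem_circ_tmk] at h
  rw [mem_circ_tmk]
  obtain ⟨m, hm⟩ := h
  refine ⟨m, ?_⟩
  rw [map_add, map_smul, smul_eq_mul] at hm
  linarith

lemma K10 : K 1 (om 0) = -1 := by simp [K_apply, kA, om]
lemma K20 : K 2 (om 0) = -1 := by simp [K_apply, kA, om]
lemma K21 : K 2 (om 1) = 1 := by
  have := sqrt3_pos
  simp [K_apply, kA, kB, om]; field_simp; norm_num

lemma fI_cases (s : ℝ) (i : Fin 3) (p : Torus) :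
    fI s i p = p + tmk (s • om i) ∨ fI s i p = p + tmk ((-s) • om i) := by
  unfold fI
  split_ifs
  · left; rfl
  · right; rw [tmk_neg_smul, sub_eq_add_neg]

lemma fS_def_of (s : ℝ) (p : Torus) (h : ∀ q ∈ badL s, p ∉ circ q.1 q.2) : fSDef s p := by
  have back : ∀ (q : Fin 3 × ℝ) (r : ℝ), q ∈ badL s → r = q.2 → p ∉ circ q.1 r := by
    rintro q r hq rfl; exact h q hq
  refine ⟨fIDef_of _ _ ?_ ?_, fIDef_of _ _ ?_ ?_, fIDef_of _ _ ?_ ?_⟩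
  · exact back (0, 0) _ (by simp [badL]) rfl
  · exact back (0, 1) _ (by simp [badL]) rfl
  · intro hc
    rcases fI_cases s 0 p with e | e <;> rw [e] at hc <;> replace hc := circ_shift _ _ _ _ _ hc <;>
      rw [K10] at hc
    · exact back (1, s) _ (by simp [badL]) (by ring) hc
    · exact back (1, -s) _ (by simp [badL]) (by ring) hc
  · intro hc
    rcases fI_cases s 0 p with e | e <;> rw [e] at hc <;> replace hc := circ_shift _ _ _ _ _ hc <;>
      rw [K10] at hc
    · exact back (1, 1 + s) _ (by simp [badL]) (by ring) hc
    · exact back (1, 1 - s) _ (by simp [badL]) (by ring) hc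
  · intro hc
    rcases fI_cases s 1 (fI s 0 p) with e' | e' <;> rw [e'] at hc <;>
      replace hc := circ_shift _ _ _ _ _ hc <;>
      rcases fI_cases s 0 p with e | e <;> rw [e] at hc <;> replace hc := circ_shift _ _ _ _ _ hc <;>
      rw [K20, K21] at hc
    · exact back (2, 0) _ (by simp [badL]) (by ring) hc
    · exact back (2, -(2 * s)) _ (by simp [badL]) (by ring) hc
    · exact back (2, 2 * s) _ (by simp [badL]) (by ring) hc
    · exact back (2, 0) _ (by simp [badL]) (by ring) hc
  · intro hc
    rcases fI_cases s 1 (fI s 0 p) with e' | e' <;> rw [e'] at hc <;>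
      replace hc := circ_shift _ _ _ _ _ hc <;>
      rcases fI_cases s 0 p with e | e <;> rw [e] at hc <;> replace hc := circ_shift _ _ _ _ _ hc <;>
      rw [K20, K21] at hc
    · exact back (2, 1) _ (by simp [badL]) (by ring) hc
    · exact back (2, 1 - 2 * s) _ (by simp [badL]) (by ring) hc
    · exact back (2, 1 + 2 * s) _ (by simp [badL]) (by ring) hc
    · exact back (2, 1) _ (by simp [badL]) (by ring) hc

/-- For every s ∈ (0,1), the tetrahedral PET f̃ₛ is a polytope
exchange transformation of the torus: there is a finite union N of line segments
in Δ̃ such that f̃ₛ is defined and injective on Δ̃ ∖ N, its image has full Haar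
measure, and it preserves Haar measure (the pushforward of Haar measure restricted
to Δ̃ ∖ N agrees with Haar measure up to a null set). -/
theorem stmt_12 (s : ℝ) (hs : s ∈ Set.Ioo (0 : ℝ) 1) :
    ∃ (N : Set Torus) (n : ℕ) (a b : Fin n → ℝ × ℝ),
      N = ⋃ i : Fin n, tmk '' segment ℝ (a i) (b i) ∧
      (∀ p ∈ Nᶜ, fSDef s p) ∧
      Set.InjOn (fS s) Nᶜ ∧
      haarT ((fS s '' Nᶜ)ᶜ) = 0 ∧
      ∃ N' : Set Torus, haarT N' = 0 ∧
        Measure.map (fS s) (haarT.restrict Nᶜ) = haarT.restrict N'ᶜ := by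
  let L := badL s
  let N : Set Torus := ⋃ k : Fin L.length, circ (L.get k).1 (L.get k).2
  have hN0 : haarT N = 0 := measure_iUnion_null fun k => circ_null _ _
  have hNm : MeasurableSet N := MeasurableSet.iUnion fun k => (circ_closed _ _).measurableSet
  refine ⟨N, L.length, fun k => (L.get k).2 • wv (L.get k).1 - om (L.get k).1,
    fun k => (L.get k).2 • wv (L.get k).1 + om (L.get k).1, ?_, ?_, ?_, ?_, ∅, measure_empty, ?_⟩
  · exact Set.iUnion_congr fun k => circ_eq_seg _ _
  · intro p hp
    apply fS_def_of
    intro q hq hpq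
    obtain ⟨k, hk⟩ := List.get_of_mem hq
    apply hp
    refine Set.mem_iUnion.2 ⟨k, ?_⟩
    show p ∈ circ ((badL s).get k).1 ((badL s).get k).2
    rw [hk]; exact hpq
  · exact (Function.LeftInverse.injective (gS_fS s)).injOn
  · have : (fS s '' Nᶜ)ᶜ ⊆ gS s ⁻¹' N := by
      intro p hp
      by_contra hc
      exact hp ⟨gS s p, hc, fS_gS s p⟩
    refine measure_mono_null this ?_
    rw [(gS_mp s).measure_preimage hNm.nullMeasurableSet, hN0]
  · have : haarT.restrict Nᶜ = haarT := by
      apply Measure.restrict_eq_self_of_ae_mem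
      rw [ae_iff]
      simpa using hN0
    rw [this, (fS_mp s).map_eq]
    simp

end
end
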